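/- arXiv:2102.05289 — 2 statements merged into one kernel-verified Lean document; each statement's English description precedes it below -/
import Mathlib

section
/- Let l, u ∈ ℝ^C with l_j ≤ u_j for all j, and let c' be a class. Define f_UB ∈ ℝ^C by f_{UB,c'} = u_{c'} and f_{UB,j} = l_j for j ≠ c'. Then f_UB lies in the box {z ∈ ℝ^C : l_j ≤ z_j ≤ u_j for all j} and σ_{c'}(z) ≤ σ_{c'}(f_UB) for every z in this box; hence σ_{c'}(f_UB) equals the maximum of σ_{c'} over the box. -/
/-- Softmax probability of class `y` for logits `z ∈ ℝ^C`. -/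
noncomputable def softmax {C : ℕ} (y : Fin C) (z : Fin C → ℝ) : ℝ :=
  Real.exp (z y) / ∑ j, Real.exp (z j)

/-- The corner vector `f_UB` with `f_{UB,c'} = u c'` and `f_{UB,j} = l j` for `j ≠ c'`. -/
def cornerUB {C : ℕ} (c' : Fin C) (l u : Fin C → ℝ) : Fin C → ℝ :=
  fun j => if j = c' then u j else l j

/-!
Dividing numerator and denominator by `exp (z y)` gives `σ_y(z) = (∑ j, exp (z j - z y))⁻¹`, so
`σ_y` depends only on the gaps `z j - z y` and is antitone in each of them. The corner `f_UB`
minimizes all the gaps to `c'` over the box simultaneously.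
-/

section

variable {C : ℕ}

theorem softmax_eq_inv_sum_exp_sub (y : Fin C) (z : Fin C → ℝ) :
    softmax y z = (∑ j, Real.exp (z j - z y))⁻¹ := by
  simp only [softmax, Real.exp_sub, ← Finset.sum_div, inv_div]

theorem softmax_le_softmax_of_sub_le_sub {y : Fin C} {z w : Fin C → ℝ}
    (h : ∀ j, w j - w y ≤ z j - z y) : softmax y z ≤ softmax y w := by
  have sum_pos : 0 < ∑ j, Real.exp (w j - w y) :=
    Finset.sum_pos (fun j _ => Real.exp_pos _) ⟨y, Finset.mem_univ y⟩
  rw [softmax_eq_inv_sum_exp_sub, softmax_eq_inv_sum_exp_sub]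
  exact inv_anti₀ sum_pos (Finset.sum_le_sum fun j _ => Real.exp_le_exp.2 (h j))

theorem cornerUB_eq_update (c' : Fin C) (l u : Fin C → ℝ) :
    cornerUB c' l u = Function.update l c' (u c') := by
  ext j
  by_cases hj : j = c' <;> simp [cornerUB, hj]

theorem cornerUB_mem_Icc {l u : Fin C → ℝ} (hlu : l ≤ u) (c' : Fin C) :
    cornerUB c' l u ∈ Set.Icc l u := by
  rw [cornerUB_eq_update, Set.mem_Icc, le_update_iff, update_le_iff]
  exact ⟨⟨hlu c', fun _ _ => le_rfl⟩, le_rfl, fun j _ => hlu j⟩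

theorem cornerUB_sub_le_sub {c' : Fin C} {l u z : Fin C → ℝ}
    (hl : ∀ j ≠ c', l j ≤ z j) (hu : z c' ≤ u c') (j : Fin C) :
    cornerUB c' l u j - cornerUB c' l u c' ≤ z j - z c' := by
  rw [cornerUB_eq_update, Function.update_self]
  obtain rfl | hj := eq_or_ne j c'
  · simp only [Function.update_self, sub_self, le_refl]
  · rw [Function.update_of_ne hj]
    exact sub_le_sub (hl j hj) hu

theorem softmax_le_softmax_cornerUB {c' : Fin C} {l u z : Fin C → ℝ}
    (hl : ∀ j ≠ c', l j ≤ z j) (hu : z c' ≤ u c') :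
    softmax c' z ≤ softmax c' (cornerUB c' l u) :=
  softmax_le_softmax_of_sub_le_sub (cornerUB_sub_le_sub hl hu)

end

/-- `f_UB` lies in the box `[l, u]`, `σ_{c'}(z) ≤ σ_{c'}(f_UB)` for every `z`
in the box, and hence `σ_{c'}(f_UB)` is the maximum of `σ_{c'}` over the box. -/
theorem cornerUB_isGreatest {C : ℕ} (l u : Fin C → ℝ) (hlu : ∀ j, l j ≤ u j) (c' : Fin C) :
    (∀ j, l j ≤ cornerUB c' l u j ∧ cornerUB c' l u j ≤ u j) ∧
    (∀ z : Fin C → ℝ, (∀ j, l j ≤ z j ∧ z j ≤ u j) →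
      softmax c' z ≤ softmax c' (cornerUB c' l u)) ∧
    IsGreatest (softmax c' '' {z : Fin C → ℝ | ∀ j, l j ≤ z j ∧ z j ≤ u j})
      (softmax c' (cornerUB c' l u)) := by
  have corner_mem : ∀ j, l j ≤ cornerUB c' l u j ∧ cornerUB c' l u j ≤ u j := fun j =>
    have ⟨hl, hu⟩ := cornerUB_mem_Icc hlu c'
    ⟨hl j, hu j⟩
  have le_corner : ∀ z : Fin C → ℝ, (∀ j, l j ≤ z j ∧ z j ≤ u j) →
      softmax c' z ≤ softmax c' (cornerUB c' l u) := fun z hz =>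
    softmax_le_softmax_cornerUB (fun j _ => (hz j).1) (hz c').2
  exact ⟨corner_mem, le_corner, Set.mem_image_of_mem _ corner_mem,
    Set.forall_mem_image.2 le_corner⟩
end

section
/- Consider a K-layer feedforward network f^w with monotone nondecreasing activation h, an input x ∈ ℝ^{n_0} and ε ≥ 0, and let f^{w,L,ε}, f^{w,U,ε} be the output bounds computed by interval bound propagation. Then for every x' ∈ ℝ^{n_0} with ‖x − x'‖_∞ ≤ ε, the network output satisfies f^{w,L,ε} ≤ f^w(x') ≤ f^{w,U,ε} componentwise; i.e., IBP yields a valid bounding box for the network output over the whole ℓ∞ ε-ball. -/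
/-- Activations of a feedforward network: `netPhi … x 0 = x` (the input `φ_(0)`) and
`netPhi … x (k+1) = h (W_k (netPhi … x k) + b_k)` (the activation `φ_(k+1)`).
For a `K`-layer network only the values with `k ≤ K - 1` are used. -/
noncomputable def netPhi (n : ℕ → ℕ)
    (W : ∀ k : ℕ, Matrix (Fin (n (k + 1))) (Fin (n k)) ℝ)
    (b : ∀ k : ℕ, Fin (n (k + 1)) → ℝ) (h : ℝ → ℝ)
    (x : Fin (n 0) → ℝ) : (k : ℕ) → Fin (n k) → ℝ
  | 0 => x
  | (k + 1) => fun i => h (((W k).mulVec (netPhi n W b h x k) + b k) i)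

/-- Pre-activations: `netPre … x k = W_k φ_(k) + b_k`, i.e. the pre-activation
`f_(k+1)` of the network.  The output of a `K`-layer network is `f^w(x) = netPre … x (K-1)`. -/
noncomputable def netPre (n : ℕ → ℕ)
    (W : ∀ k : ℕ, Matrix (Fin (n (k + 1))) (Fin (n k)) ℝ)
    (b : ∀ k : ℕ, Fin (n (k + 1)) → ℝ) (h : ℝ → ℝ)
    (x : Fin (n 0) → ℝ) (k : ℕ) : Fin (n (k + 1)) → ℝ :=
  (W k).mulVec (netPhi n W b h x k) + b k

/-- Interval bound propagation on the activations: `ibpPhi … x ε k = (φ_(k)^L, φ_(k)^U)`.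
At `k = 0` the bounds are `x ∓ ε·𝟙`; at `k+1` they are `h (μ_{k+1} ∓ r_{k+1})` with
`μ_{k+1} = W_k (φ_(k)^U + φ_(k)^L)/2 + b_k` and `r_{k+1} = |W_k| (φ_(k)^U − φ_(k)^L)/2`. -/
noncomputable def ibpPhi (n : ℕ → ℕ)
    (W : ∀ k : ℕ, Matrix (Fin (n (k + 1))) (Fin (n k)) ℝ)
    (b : ∀ k : ℕ, Fin (n (k + 1)) → ℝ) (h : ℝ → ℝ)
    (x : Fin (n 0) → ℝ) (ε : ℝ) : (k : ℕ) → (Fin (n k) → ℝ) × (Fin (n k) → ℝ)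
  | 0 => (fun i => x i - ε, fun i => x i + ε)
  | (k + 1) =>
      let L := (ibpPhi n W b h x ε k).1
      let U := (ibpPhi n W b h x ε k).2
      let μ := (W k).mulVec (fun i => (U i + L i) / 2) + b k
      let r := (Matrix.of fun i j => |W k i j|).mulVec (fun i => (U i - L i) / 2)
      (fun i => h (μ i - r i), fun i => h (μ i + r i))

/-- Interval bound propagation on the pre-activations:
`ibpPre … x ε k = (f_(k+1)^L, f_(k+1)^U) = (μ_{k+1} − r_{k+1}, μ_{k+1} + r_{k+1})`.
The IBP output bounds of a `K`-layer network are `(f^{w,L,ε}, f^{w,U,ε}) = ibpPre … x ε (K-1)`. -/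
noncomputable def ibpPre (n : ℕ → ℕ)
    (W : ∀ k : ℕ, Matrix (Fin (n (k + 1))) (Fin (n k)) ℝ)
    (b : ∀ k : ℕ, Fin (n (k + 1)) → ℝ) (h : ℝ → ℝ)
    (x : Fin (n 0) → ℝ) (ε : ℝ) (k : ℕ) : (Fin (n (k + 1)) → ℝ) × (Fin (n (k + 1)) → ℝ) :=
  let L := (ibpPhi n W b h x ε k).1
  let U := (ibpPhi n W b h x ε k).2
  let μ := (W k).mulVec (fun i => (U i + L i) / 2) + b k
  let r := (Matrix.of fun i j => |W k i j|).mulVec (fun i => (U i - L i) / 2)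
  (fun i => μ i - r i, fun i => μ i + r i)

/-!
The box `|v - μ| ≤ r` is mapped by `v ↦ A *ᵥ v + c` into the box with
centre `A *ᵥ μ + c` and radius `|A| *ᵥ r`, by the triangle inequality in each row, and a monotone
activation applied coordinatewise maps a box into the box spanned by the images of its two corners.
Induction on the layers propagates both facts from the input to the output.
-/

open Set
open scoped Matrix

section CenterRadius

variable {m n R : Type*} [Fintype n] [Ring R] [LinearOrder R] [IsOrderedRing R]

theorem abs_mulVec_le_map_abs_mulVec_of_abs_le (A : Matrix m n R) {v r : n → R} (hv : |v| ≤ r) :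
    |A *ᵥ v| ≤ A.map abs *ᵥ r := fun i =>
  calc |∑ j, A i j * v j|
      ≤ ∑ j, |A i j * v j| := Finset.abs_sum_le_sum_abs _ _
    _ = ∑ j, |A i j| * |v j| := by simp only [abs_mul]
    _ ≤ ∑ j, |A i j| * r j :=
      Finset.sum_le_sum fun j _ => mul_le_mul_of_nonneg_left (hv j) (abs_nonneg _)

theorem mulVec_add_mem_Icc_of_abs_sub_le (A : Matrix m n R) (c : m → R) {v μ r : n → R}
    (hv : |v - μ| ≤ r) :
    A *ᵥ v + c ∈ Icc (A *ᵥ μ + c - A.map abs *ᵥ r) (A *ᵥ μ + c + A.map abs *ᵥ r) := by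
  have hdev : |(A *ᵥ v + c) - (A *ᵥ μ + c)| ≤ A.map abs *ᵥ r := by
    simpa only [add_sub_add_right_eq_sub, ← Matrix.mulVec_sub]
      using abs_mulVec_le_map_abs_mulVec_of_abs_le A hv
  obtain ⟨hupper, hlower⟩ := abs_le'.mp hdev
  rw [neg_sub] at hlower
  exact ⟨sub_le_comm.mp hlower, sub_le_iff_le_add'.mp hupper⟩

end CenterRadius

theorem abs_sub_half_add_le_half_sub {𝕜 : Type*} [Field 𝕜] [LinearOrder 𝕜] [IsStrictOrderedRing 𝕜]
    {a b t : 𝕜} (ht : t ∈ Icc a b) : |t - (b + a) / 2| ≤ (b - a) / 2 := by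
  rw [abs_le]
  constructor <;> linarith [ht.1, ht.2]

theorem mem_Icc_of_pi_norm_sub_le {ι : Type*} [Fintype ι] {x y : ι → ℝ} {ε : ℝ}
    (hxy : ‖x - y‖ ≤ ε) : y ∈ Icc (fun i => x i - ε) (fun i => x i + ε) := by
  have hcoord (i : ι) : |x i - y i| ≤ ε := (norm_le_pi_norm (x - y) i).trans hxy
  exact ⟨fun i => sub_le_comm.mp (abs_sub_le_iff.mp (hcoord i)).1,
    fun i => sub_le_iff_le_add'.mp (abs_sub_le_iff.mp (hcoord i)).2⟩

section Propagation

variable (n : ℕ → ℕ) (W : ∀ k : ℕ, Matrix (Fin (n (k + 1))) (Fin (n k)) ℝ)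
  (b : ∀ k : ℕ, Fin (n (k + 1)) → ℝ) (h : ℝ → ℝ)

theorem netPhi_succ (x : Fin (n 0) → ℝ) (k : ℕ) :
    netPhi n W b h x (k + 1) = h ∘ netPre n W b h x k := rfl

theorem ibpPhi_succ (x : Fin (n 0) → ℝ) (ε : ℝ) (k : ℕ) :
    ibpPhi n W b h x ε (k + 1) =
      (h ∘ (ibpPre n W b h x ε k).1, h ∘ (ibpPre n W b h x ε k).2) := rfl

variable {n W b h} {x x' : Fin (n 0) → ℝ} {ε : ℝ}

theorem netPre_mem_Icc_ibpPre_of_netPhi_mem {k : ℕ}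
    (hk : netPhi n W b h x' k ∈ Icc (ibpPhi n W b h x ε k).1 (ibpPhi n W b h x ε k).2) :
    netPre n W b h x' k ∈ Icc (ibpPre n W b h x ε k).1 (ibpPre n W b h x ε k).2 :=
  mulVec_add_mem_Icc_of_abs_sub_le (W k) (b k) fun j =>
    abs_sub_half_add_le_half_sub ⟨hk.1 j, hk.2 j⟩

theorem netPhi_mem_Icc_ibpPhi (hmono : Monotone h) (hx' : ‖x - x'‖ ≤ ε) (k : ℕ) :
    netPhi n W b h x' k ∈ Icc (ibpPhi n W b h x ε k).1 (ibpPhi n W b h x ε k).2 := by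
  induction k with
  | zero => exact mem_Icc_of_pi_norm_sub_le hx'
  | succ k ih =>
    obtain ⟨hlower, hupper⟩ := netPre_mem_Icc_ibpPre_of_netPhi_mem ih
    rw [netPhi_succ, ibpPhi_succ]
    exact ⟨fun i => hmono (hlower i), fun i => hmono (hupper i)⟩

theorem netPre_mem_Icc_ibpPre (hmono : Monotone h) (hx' : ‖x - x'‖ ≤ ε) (k : ℕ) :
    netPre n W b h x' k ∈ Icc (ibpPre n W b h x ε k).1 (ibpPre n W b h x ε k).2 :=
  netPre_mem_Icc_ibpPre_of_netPhi_mem (netPhi_mem_Icc_ibpPhi hmono hx' k)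

end Propagation

/-- IBP yields a valid bounding box for the network output.  For a
`K`-layer network (`K ≥ 1`) with monotone nondecreasing activation `h`, input `x` and
radius `ε ≥ 0`, every `x'` with `‖x − x'‖_∞ ≤ ε` satisfies
`f^{w,L,ε} ≤ f^w(x') ≤ f^{w,U,ε}` componentwise, where `f^w(x') = netPre … x' (K-1)`
and `(f^{w,L,ε}, f^{w,U,ε}) = ibpPre … x ε (K-1)`. -/
theorem ibp_output_bounds (n : ℕ → ℕ)
    (W : ∀ k : ℕ, Matrix (Fin (n (k + 1))) (Fin (n k)) ℝ)
    (b : ∀ k : ℕ, Fin (n (k + 1)) → ℝ) (h : ℝ → ℝ) (hmono : Monotone h)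
    (K : ℕ) (hK : 1 ≤ K) (x : Fin (n 0) → ℝ) (ε : ℝ) (hε : 0 ≤ ε)
    (x' : Fin (n 0) → ℝ) (hx' : ‖x - x'‖ ≤ ε) :
    ∀ i, (ibpPre n W b h x ε (K - 1)).1 i ≤ netPre n W b h x' (K - 1) i ∧
        netPre n W b h x' (K - 1) i ≤ (ibpPre n W b h x ε (K - 1)).2 i := by
  intro i
  obtain ⟨hlower, hupper⟩ := netPre_mem_Icc_ibpPre hmono hx' (K - 1)
  exact ⟨hlower i, hupper i⟩
end
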